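/- Let Q be a primitive positive-definite quaternary integer-valued quadratic form, let p be an odd prime, and let n be a positive integer with p ∤ n. If n is represented by Q over ℤ_p (i.e. there exists x ∈ ℤ_p⁴ with Q(x) = n), then the local density β_p(Q;n) exists and satisfies β_p(Q;n) ≥ 1 − 1/p. -/

import Mathlib

open scoped BigOperators

/-- Value of the quadratic form with Gram matrix `A` (symmetric, even diagonal)
over any commutative ring: `Q(x) = ∑ (aᵢᵢ/2) xᵢ² + ∑_{i<j} aᵢⱼ xᵢ xⱼ`. -/
def Qval {R : Type*} [CommRing R] (A : Matrix (Fin 4) (Fin 4) ℤ) (x : Fin 4 → R) : R :=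
  (∑ i, ((A i i / 2 : ℤ) : R) * x i ^ 2) +
    ∑ i, ∑ j ∈ Finset.Ioi i, ((A i j : ℤ) : R) * (x i * x j)

/-- `A` is the Gram matrix of an integer-valued quadratic form. -/
def IsGram (A : Matrix (Fin 4) (Fin 4) ℤ) : Prop :=
  A.IsSymm ∧ ∀ i, 2 ∣ A i i

/-- The form is primitive: the gcd of its coefficients is 1. -/
def IsPrimitiveQF (A : Matrix (Fin 4) (Fin 4) ℤ) : Prop :=
  ∀ d : ℤ, (∀ i, d ∣ A i i / 2) → (∀ i j, i ≠ j → d ∣ A i j) → IsUnit d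

/-- The form is positive definite. -/
def PosDefQF (A : Matrix (Fin 4) (Fin 4) ℤ) : Prop :=
  (A.map (Int.cast : ℤ → ℝ)).PosDef

/-- `N` is the level of the form with Gram matrix `A`: the smallest positive integer
such that `N • A⁻¹` has integer entries and even diagonal. -/
def IsLevel (A : Matrix (Fin 4) (Fin 4) ℤ) (N : ℕ) : Prop :=
  0 < N ∧
    (∃ B : Matrix (Fin 4) (Fin 4) ℤ,
      B.map (Int.cast : ℤ → ℚ) = (N : ℚ) • (A.map (Int.cast : ℤ → ℚ))⁻¹ ∧ ∀ i, 2 ∣ B i i) ∧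
    ∀ M : ℕ, 0 < M →
      (∃ B : Matrix (Fin 4) (Fin 4) ℤ,
        B.map (Int.cast : ℤ → ℚ) = (M : ℚ) • (A.map (Int.cast : ℤ → ℚ))⁻¹ ∧ ∀ i, 2 ∣ B i i) →
      N ≤ M

/-- `n` is represented by the form over `ℤ`. -/
def Represented (A : Matrix (Fin 4) (Fin 4) ℤ) (n : ℕ) : Prop :=
  ∃ x : Fin 4 → ℤ, Qval A x = (n : ℤ)

/-- `n` is locally represented: representable over `ℤ_p` for every prime `p`. -/
def LocallyRepresented (A : Matrix (Fin 4) (Fin 4) ℤ) (n : ℕ) : Prop :=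
  ∀ (p : ℕ) [Fact p.Prime], ∃ x : Fin 4 → ℤ_[p], Qval A x = (n : ℤ_[p])

/-- Number of solutions of `Q(x) ≡ n mod p^k`. -/
noncomputable def localCount (A : Matrix (Fin 4) (Fin 4) ℤ) (p n k : ℕ) : ℕ :=
  Nat.card {x : Fin 4 → ZMod (p ^ k) // Qval A x = (n : ZMod (p ^ k))}

/-- The local density `β_p(Q;n)` exists and is at least `c`. -/
def DensityBound (A : Matrix (Fin 4) (Fin 4) ℤ) (p n : ℕ) (c : ℝ) : Prop :=
  ∃ β : ℝ,
    Filter.Tendsto (fun k => (localCount A p n k : ℝ) / (p : ℝ) ^ (3 * k))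
      Filter.atTop (nhds β) ∧ c ≤ β


theorem Qval_map {R S : Type*} [CommRing R] [CommRing S] (f : R →+* S)
    (A : Matrix (Fin 4) (Fin 4) ℤ) (x : Fin 4 → R) :
    Qval A (fun i => f (x i)) = f (Qval A x) := by
  simp [Qval, map_sum]

theorem Qval_smul {R : Type*} [CommRing R] (A : Matrix (Fin 4) (Fin 4) ℤ) (c : R)
    (x : Fin 4 → R) : Qval A (c • x) = c ^ 2 * Qval A x := by
  simp only [Qval, mul_add, Finset.mul_sum, Pi.smul_apply, smul_eq_mul]
  congr 1
  · exact Finset.sum_congr rfl fun i _ => by ring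
  · exact Finset.sum_congr rfl fun i _ => Finset.sum_congr rfl fun j _ => by ring

theorem card_preimage_hom {G H : Type*} [AddCommGroup G] [AddCommGroup H] [Fintype G] [Fintype H]
    [DecidableEq H] (f : G →+ H) (hf : Function.Surjective f) (P : H → Prop) [DecidablePred P] :
    Fintype.card {x : G // P (f x)} * Fintype.card H = Fintype.card {y : H // P y} * Fintype.card G := by
  have key : ∀ (S : Finset H),
      (Finset.univ.filter fun x => f x ∈ S).card
        = S.card * (Finset.univ.filter fun x => f x = 0).card := by
    intro S
    rw [Finset.card_eq_sum_card_fiberwise (f := f) (t := S) (by intro x hx; simpa using hx)]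
    rw [Finset.sum_const_nat (m := (Finset.univ.filter fun x => f x = 0).card)]
    intro y hy
    obtain ⟨g, rfl⟩ := hf y
    refine Finset.card_bij' (fun x _ => x - g) (fun x _ => x + g) ?_ ?_ ?_ ?_
    · intro x hx; simp at hx ⊢; rw [hx.2, sub_self]
    · intro x hx; simp at hx ⊢; simp [hx, hy]
    · intros; simp
    · intros; simp
  have h1 := key Finset.univ
  have h2 := key (Finset.univ.filter P)
  simp at h1 h2
  rw [Fintype.card_subtype, Fintype.card_subtype, h2, h1]
  ring

theorem localCount_succ (A : Matrix (Fin 4) (Fin 4) ℤ) (p n k : ℕ) [hp : Fact p.Prime]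
    (hodd : p ≠ 2) (hcop : ¬ p ∣ n) (hk : 1 ≤ k) :
    localCount A p n (k + 1) = p ^ 3 * localCount A p n k := by
  classical
  have hp0 : 0 < p := hp.out.pos
  have : NeZero (p ^ k) := ⟨(pow_pos hp0 _).ne'⟩
  have : NeZero (p ^ (k+1)) := ⟨(pow_pos hp0 _).ne'⟩
  have hdvd : p ^ k ∣ p ^ (k+1) := pow_dvd_pow _ (Nat.le_succ k)
  let π : ZMod (p ^ (k+1)) →+* ZMod (p ^ k) := ZMod.castHom hdvd _
  have hπ : Function.Surjective π := ZMod.castHom_surjective hdvd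
  let f : (Fin 4 → ZMod (p ^ (k+1))) →+ (Fin 4 → ZMod (p ^ k)) :=
    { toFun := fun x i => π (x i)
      map_zero' := by ext; simp
      map_add' := by intros; ext; simp }
  have hf : Function.Surjective f := by
    intro y
    choose g hg using hπ
    exact ⟨fun i => g (y i), by ext i; simp [f, hg]⟩
  have h1 := card_preimage_hom f hf (fun y => Qval A y = (n : ZMod (p ^ k)))
  set q : ZMod (p ^ (k+1)) := (p : ZMod (p ^ (k+1))) ^ k with hq
  have hq2 : q * q = 0 := by
    have : ((p ^ (k + k) : ℕ) : ZMod (p ^ (k+1))) = 0 := by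
      rw [ZMod.natCast_eq_zero_iff]; exact pow_dvd_pow _ (by omega)
    rw [hq, ← pow_add]; exact_mod_cast this
  have hqz : ∀ z : ℤ, q * (z : ZMod (p ^ (k+1))) = 0 ↔ (p : ℤ) ∣ z := by
    intro z
    have : q * (z : ZMod (p ^ (k+1))) = (((p:ℤ) ^ k * z : ℤ) : ZMod (p ^ (k+1))) := by
      rw [hq]; push_cast; rfl
    rw [this, ZMod.intCast_zmod_eq_zero_iff_dvd]
    push_cast
    rw [pow_succ]
    exact mul_dvd_mul_iff_left (by positivity)
  have hker : ∀ r : ZMod (p ^ (k+1)), π r = 0 → ∃ z : ℤ, r = q * z := by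
    intro r hr
    obtain ⟨m, rfl⟩ := ZMod.intCast_surjective r
    rw [map_intCast, ZMod.intCast_zmod_eq_zero_iff_dvd] at hr
    obtain ⟨z, rfl⟩ := hr
    exact ⟨z, by rw [hq]; push_cast; rfl⟩
  have hπq : π q = 0 := by
    rw [hq, map_pow, map_natCast, ← Nat.cast_pow, ZMod.natCast_self]
  have hpi : Prime (p : ℤ) := Nat.prime_iff_prime_int.mp hp.out
  have h2n : ¬ (p : ℤ) ∣ 2 * n := by
    intro h
    rcases hpi.dvd_or_dvd h with h | h
    · have : p ∣ 2 := by exact_mod_cast h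
      exact hodd ((Nat.prime_dvd_prime_iff_eq hp.out Nat.prime_two).mp this)
    · exact hcop (by exact_mod_cast h)
  have hunit : ∀ u : ZMod (p ^ (k+1)), (1 - q * u) * (1 + q * u) = 1 := by
    intro u; linear_combination (-u^2) * hq2
  have hval : ∀ (u : ZMod (p ^ (k+1))) (x : Fin 4 → ZMod (p ^ (k+1))) (r),
      Qval A x = n + q * r →
      Qval A ((1 + q * u) • x) = n + q * (r + 2 * n * u) := by
    intro u x r hx
    rw [Qval_smul, hx]
    linear_combination (2 * u * r + u ^ 2 * n + u^2 * q * r) * hq2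
  have h2 : Fintype.card {x : Fin 4 → ZMod (p ^ (k+1)) // Qval A (f x) = (n : ZMod (p ^ k))}
      = p * Fintype.card {x : Fin 4 → ZMod (p ^ (k+1)) // Qval A x = (n : ZMod (p ^ (k+1)))} := by
    have : p * Fintype.card {x : Fin 4 → ZMod (p ^ (k+1)) // Qval A x = (n : ZMod (p ^ (k+1)))}
      = Fintype.card (Fin p × {x : Fin 4 → ZMod (p ^ (k+1)) // Qval A x = (n : ZMod (p ^ (k+1)))}) := by
      simp
    rw [this]
    symm
    refine Fintype.card_of_bijective (f := fun ux => ⟨(1 + q * ((ux.1 : ℕ) : ZMod (p ^ (k+1)))) • ux.2.1, ?_⟩) ⟨?_, ?_⟩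
    · have : f ((1 + q * ((ux.1 : ℕ) : ZMod (p ^ (k+1)))) • ux.2.1) = fun i => π (ux.2.1 i) := by
        ext i; simp [f, hπq]
      rw [this, Qval_map, ux.2.2, map_natCast]
    · rintro ⟨u, x, hx⟩ ⟨u', x', hx'⟩ h
      simp only [Subtype.mk.injEq] at h
      have e := hval (u : ℕ) x 0 (by simpa using hx)
      have e' := hval (u' : ℕ) x' 0 (by simpa using hx')
      rw [h, e'] at e
      have e3 : q * ((2 * n * ((u:ℤ) - (u':ℤ)) : ℤ) : ZMod (p ^ (k+1))) = 0 := by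
        push_cast; linear_combination -e
      rw [hqz] at e3
      have e4 := (hpi.dvd_or_dvd e3).resolve_left h2n
      have : u = u' := by
        have h1 := u.2
        have h2 := u'.2
        have := Int.eq_zero_of_abs_lt_dvd e4 (by rw [abs_lt]; omega)
        ext; omega
      subst this
      have h5 := congrArg (fun y => (1 - q * ((u:ℕ) : ZMod (p ^ (k+1)))) • y) h
      simp only [smul_smul, hunit, one_smul] at h5
      simp [h5]
    · rintro ⟨x, hx⟩
      have hx' : π (Qval A x - n) = 0 := by
        rw [map_sub, ← Qval_map, map_natCast, sub_eq_zero]; exact hx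
      obtain ⟨z, hz⟩ := hker _ hx'
      have : ∃ v : ℕ, v < p ∧ (p:ℤ) ∣ z - 2 * n * v := by
        have hne : ((2 * n : ℤ) : ZMod p) ≠ 0 := by
          rw [Ne, ZMod.intCast_zmod_eq_zero_iff_dvd]; exact h2n
        refine ⟨((z : ZMod p) / ((2 * n : ℤ) : ZMod p)).val, ZMod.val_lt _, ?_⟩
        rw [← ZMod.intCast_zmod_eq_zero_iff_dvd]
        have e : ((2 * n : ℤ) : ZMod p) = 2 * n := by push_cast; rfl
        rw [e] at hne ⊢
        push_cast
        rw [ZMod.natCast_zmod_val, mul_div_cancel₀ _ hne, sub_self]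
      obtain ⟨v, hv, hd⟩ := this
      have hy := hval (-(v : ZMod (p ^ (k+1)))) x z (by linear_combination hz)
      have hd' := (hqz _).2 hd
      push_cast at hd'
      refine ⟨(⟨v, hv⟩, ⟨(1 + q * (-(v : ZMod (p ^ (k+1))))) • x, ?_⟩), ?_⟩
      · rw [hy]; linear_combination hd'
      · ext1
        simp only [smul_smul]
        have := hunit (-(v : ZMod (p ^ (k+1))))
        rw [show (1 + q * (v : ZMod (p ^ (k+1)))) = 1 - q * (-(v : ZMod (p ^ (k+1)))) by ring, this, one_smul]
  unfold localCount
  rw [Nat.card_eq_fintype_card, Nat.card_eq_fintype_card]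
  rw [h2] at h1
  simp only [Fintype.card_fun, ZMod.card, Fintype.card_fin] at h1
  have hpos : 0 < p * (p ^ k) ^ 4 := by positivity
  apply Nat.eq_of_mul_eq_mul_left hpos
  refine Eq.trans ?_ (h1.trans ?_)
  · ring
  · ring

section counting
variable {F : Type*} [Field F] [Fintype F] [DecidableEq F]

theorem count_split (h2 : (2:F) ≠ 0) (a b d s : F) (ha : a ≠ 0) (hb : b ≠ 0) (hs : -(a*b) = s * s) :
    Fintype.card F ≤ Fintype.card {v : F × F // a * v.1^2 + b * v.2^2 = d} + 1 := by
  have hs0 : s ≠ 0 := by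
    rintro rfl
    simp [ha, hb] at hs
  have := Fintype.card_units (α := F)
  have key : Fintype.card Fˣ ≤ Fintype.card {v : F × F // a * v.1^2 + b * v.2^2 = d} := by
    refine Fintype.card_le_of_injective
      (fun u => ⟨(((u:F) + a * d / u) / (2 * a), (a * d / u - u) / (2 * s)), ?_⟩) ?_
    · have hu : (u:F) ≠ 0 := u.ne_zero
      have hb' : b = -(s*s)/a := by field_simp; linear_combination -hs
      simp only [hb']
      field_simp
      ring
    · intro u v h
      simp only [Subtype.mk.injEq, Prod.mk.injEq] at h
      have e : ∀ u : Fˣ, (u:F) = a * (((u:F) + a * d / u) / (2 * a)) - s * ((a * d / u - u) / (2 * s)) := by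
        intro u
        have hu : (u:F) ≠ 0 := u.ne_zero
        field_simp
        ring
      ext
      rw [e u, e v, h.1, h.2]
  omega

theorem count_nonsplit (h2 : (2:F) ≠ 0) (hodd : Fintype.card F % 2 = 1) (a b d : F)
    (ha : a ≠ 0) (hb : b ≠ 0) (hd : d ≠ 0) (hs : ¬ IsSquare (-(a*b))) :
    Fintype.card F + 1 ≤ Fintype.card {v : F × F // a * v.1^2 + b * v.2^2 = d} := by
  obtain ⟨x0, y0, h0⟩ : ∃ x0 y0 : F, a * x0^2 + b * y0^2 = d := by
    have := FiniteField.exists_root_sum_quadratic (R := F)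
      (f := Polynomial.C a * Polynomial.X^2 + Polynomial.C 0 * Polynomial.X + Polynomial.C (-d))
      (g := Polynomial.C b * Polynomial.X^2 + Polynomial.C 0 * Polynomial.X + Polynomial.C 0)
      (Polynomial.degree_quadratic ha) (Polynomial.degree_quadratic hb) hodd
    obtain ⟨x, y, h⟩ := this
    refine ⟨x, y, ?_⟩
    simp at h
    linear_combination h
  obtain ⟨e, he⟩ : ∃ e, e = -(a*b) := ⟨_, rfl⟩
  rw [← he] at hs
  have hden : ∀ m : F, 1 - e * m^2 ≠ 0 := by
    intro m h
    have hm : m ≠ 0 := by rintro rfl; simp at h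
    apply hs
    refine ⟨1/m, ?_⟩
    field_simp
    linear_combination -h
  let al : Option F → F := fun o => o.elim (-1) (fun m => (1 + e * m^2) / (1 - e * m^2))
  let be : Option F → F := fun o => o.elim 0 (fun m => 2 * m / (1 - e * m^2))
  have hnorm : ∀ o, al o ^ 2 - e * be o ^ 2 = 1 := by
    rintro (_ | m)
    · simp [al, be]
    · have := hden m
      simp only [al, be, Option.elim]
      field_simp
      ring
  have hinj : ∀ o o', al o = al o' → be o = be o' → o = o' := by
    have h1 : ∀ m, al (some m) + 1 = 2 / (1 - e * m^2) := by
      intro m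
      have := hden m
      simp only [al, Option.elim]
      field_simp
      ring
    have h1' : ∀ m, al (some m) + 1 ≠ 0 := fun m => by
      rw [h1]; exact div_ne_zero h2 (hden m)
    have h3 : ∀ m, m = be (some m) / (al (some m) + 1) := by
      intro m
      have := hden m
      rw [h1]
      simp only [be, Option.elim]
      rw [div_div_div_cancel_right₀ this, mul_div_cancel_left₀ _ h2]
    have h4 : al none + 1 = 0 := by simp [al]
    rintro (_ | m) (_ | m') h h'
    · rfl
    · exact absurd (by rw [← h, h4]) (h1' m')
    · exact absurd (by rw [h, h4]) (h1' m)
    · rw [h3 m, h3 m', h, h']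
  rw [← Fintype.card_option]
  refine Fintype.card_le_of_injective
      (fun o => ⟨(x0 * al o - b * y0 * be o, a * x0 * be o + y0 * al o), ?_⟩) ?_
  · have := hnorm o
    simp only
    rw [he] at this
    linear_combination d * this + (al o ^2 + a * b * be o ^2) * h0
  · intro o o' h
    simp only [Subtype.mk.injEq, Prod.mk.injEq] at h
    obtain ⟨e1, e2⟩ := h
    apply hinj
    · apply mul_left_cancel₀ hd
      rw [← h0]
      linear_combination a * x0 * e1 + b * y0 * e2
    · apply mul_left_cancel₀ hd
      rw [← h0]
      linear_combination x0 * e2 - y0 * e1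

theorem count_fiber {Z : Type*} [Fintype Z] (h2 : (2:F) ≠ 0) (hodd : Fintype.card F % 2 = 1)
    (a b c : F) (g : Z → F) (ha : a ≠ 0) (hb : b ≠ 0)
    (hM : Fintype.card F * Fintype.card {z // g z = c} ≤ 2 * Fintype.card Z) :
    Fintype.card F * Fintype.card Z ≤
      Fintype.card {v : Z × (F × F) // a * v.2.1^2 + b * v.2.2^2 + g v.1 = c} + Fintype.card Z := by
  have e : {v : Z × (F × F) // a * v.2.1^2 + b * v.2.2^2 + g v.1 = c} ≃
      (Σ z : Z, {v : F × F // a * v.1^2 + b * v.2^2 = c - g z}) :=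
    { toFun := fun v => ⟨v.1.1, v.1.2, by linear_combination v.2⟩
      invFun := fun v => ⟨(v.1, v.2.1), by simp only; rw [v.2.2]; ring⟩
      left_inv := fun v => rfl
      right_inv := fun v => rfl }
  rw [Fintype.card_congr e, Fintype.card_sigma]
  by_cases hs : IsSquare (-(a*b))
  · obtain ⟨s, hs⟩ := hs
    have := Finset.sum_le_sum (s := (Finset.univ : Finset Z))
      (fun z _ => count_split h2 a b (c - g z) s ha hb hs)
    rw [Finset.sum_add_distrib] at this
    simp only [Finset.sum_const, Finset.card_univ, smul_eq_mul, mul_one] at this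
    rw [mul_comm]; exact this
  · have hz : ∀ z : Z, Fintype.card F + 1 ≤
      Fintype.card {v : F × F // a * v.1^2 + b * v.2^2 = c - g z} +
        Fintype.card F * (if g z = c then 1 else 0) := by
      intro z
      split_ifs with h
      · have : 0 < Fintype.card {v : F × F // a * v.1^2 + b * v.2^2 = c - g z} :=
          Fintype.card_pos_iff.2 ⟨⟨(0,0), by simp [h]⟩⟩
        omega
      · have := count_nonsplit h2 hodd a b (c - g z) ha hb (sub_ne_zero.2 (Ne.symm h)) hs
        omega
    have := Finset.sum_le_sum (s := (Finset.univ : Finset Z)) (fun z _ => hz z)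
    rw [Finset.sum_add_distrib, Finset.sum_add_distrib, ← Finset.mul_sum, ← Finset.card_filter, ← Fintype.card_subtype] at this
    simp only [Finset.sum_const, Finset.card_univ, smul_eq_mul] at this
    nlinarith

theorem count_sq (a d : F) (ha : a ≠ 0) : Fintype.card {z : F // a * z^2 = d} ≤ 2 := by
  rw [Fintype.card_subtype]
  by_cases h : ∃ r, a * r^2 = d
  · obtain ⟨r, hr⟩ := h
    refine (Finset.card_le_card (t := {r, -r}) ?_).trans Finset.card_le_two
    intro z hz
    simp only [Finset.mem_filter, Finset.mem_univ, true_and] at hz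
    simp only [Finset.mem_insert, Finset.mem_singleton]
    exact sq_eq_sq_iff_eq_or_eq_neg.1 (mul_left_cancel₀ ha (hz.trans hr.symm))
  · push Not at h
    simp [h]

theorem count_binary' (a b c : F) (ha : a ≠ 0) :
    Fintype.card {v : F × F // b * v.1^2 + a * v.2^2 = c} ≤ 2 * Fintype.card F := by
  have e : {v : F × F // b * v.1^2 + a * v.2^2 = c} ≃ (Σ y : F, {x : F // a * x^2 = c - b * y^2}) :=
    { toFun := fun v => ⟨v.1.1, v.1.2, by linear_combination v.2⟩
      invFun := fun v => ⟨(v.1, v.2.1), by simp only; rw [v.2.2]; ring⟩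
      left_inv := fun v => rfl
      right_inv := fun v => rfl }
  rw [Fintype.card_congr e, Fintype.card_sigma]
  have := Finset.sum_le_sum (s := (Finset.univ : Finset F))
    (fun y _ => count_sq a (c - b * y^2) ha)
  simp only [Finset.sum_const, Finset.card_univ, smul_eq_mul] at this
  rw [mul_comm 2]; exact this

theorem count_binary (a b c : F) (hc : c ≠ 0) :
    Fintype.card {v : F × F // b * v.1^2 + a * v.2^2 = c} ≤ 2 * Fintype.card F := by
  by_cases ha : a = 0
  · by_cases hb : b = 0
    · have : IsEmpty {v : F × F // b * v.1^2 + a * v.2^2 = c} :=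
        ⟨fun v => hc (by have := v.2; simp only [ha, hb, zero_mul, add_zero] at this; exact this.symm)⟩
      rw [Fintype.card_eq_zero]; exact Nat.zero_le _
    · refine le_trans (le_of_eq (Fintype.card_congr ?_)) (count_binary' b a c hb)
      exact (Equiv.prodComm F F).subtypeEquiv (fun v => by simp [add_comm])
  · exact count_binary' a b c ha

theorem count_diag (h2 : (2:F) ≠ 0) (hodd : Fintype.card F % 2 = 1) (w : Fin 4 → F) (c : F)
    (hc : c ≠ 0) (hex : ∃ x : Fin 4 → F, ∑ i, w i * (x i * x i) = c) :
    Fintype.card F ^ 3 ≤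
      Fintype.card {x : Fin 4 → F // ∑ i, w i * (x i * x i) = c} + Fintype.card F ^ 2 := by
  by_cases h : ∃ i j, i ≠ j ∧ w i ≠ 0 ∧ w j ≠ 0
  · obtain ⟨i, j, hij, hi, hj⟩ := h
    have hσ : ∃ σ : Equiv.Perm (Fin 4), σ 0 = i ∧ σ 1 = j := by
      clear hi hj; revert i j; decide
    obtain ⟨σ, rfl, rfl⟩ := hσ
    have h1 := count_fiber (Z := F × F) h2 hodd (w (σ 0)) (w (σ 1)) c
      (fun z => w (σ 2) * z.1^2 + w (σ 3) * z.2^2) hi hj (by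
        have := count_binary (w (σ 3)) (w (σ 2)) c hc
        rw [Fintype.card_prod]
        nlinarith)
    have h3 : Fintype.card {v : (F × F) × (F × F) // w (σ 0) * v.2.1^2 + w (σ 1) * v.2.2^2
        + (w (σ 2) * v.1.1^2 + w (σ 3) * v.1.2^2) = c} ≤
        Fintype.card {x : Fin 4 → F // ∑ i, w i * (x i * x i) = c} := by
      refine Fintype.card_le_of_injective
        (fun v => ⟨![v.1.2.1, v.1.2.2, v.1.1.1, v.1.1.2] ∘ σ.symm, ?_⟩) ?_
      · rw [← Equiv.sum_comp σ]
        simp [Fin.sum_univ_four]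
        linear_combination v.2
      · rintro ⟨⟨⟨a, b⟩, ⟨a', b'⟩⟩, hv⟩ ⟨⟨⟨a1, b1⟩, ⟨a1', b1'⟩⟩, hv1⟩ h
        simp only [Subtype.mk.injEq] at h
        have h := fun k => congrFun h (σ k)
        have e0 := h 0
        have e1 := h 1
        have e2 := h 2
        have e3 := h 3
        simp at e0 e1 e2 e3
        simp [e0, e1, e2, e3]
    rw [Fintype.card_prod] at h1
    nlinarith
  · have : ∃ i, ∀ j, j ≠ i → w j = 0 := by
      by_cases h' : ∃ i, w i ≠ 0
      · obtain ⟨i, hi⟩ := h'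
        exact ⟨i, fun j hj => by_contra fun hj' => h ⟨i, j, hj.symm, hi, hj'⟩⟩
      · push Not at h'
        exact ⟨0, fun j _ => h' j⟩
    obtain ⟨i, hi⟩ := this
    obtain ⟨x, hx⟩ := hex
    have hsum : ∀ y : Fin 4 → F, ∑ k, w k * (y k * y k) = w i * (y i * y i) := fun y =>
      Finset.sum_eq_single i (fun k _ hk => by simp [hi k hk]) (by simp)
    have : Fintype.card (Fin 3 → F) ≤ Fintype.card {x : Fin 4 → F // ∑ i, w i * (x i * x i) = c} := by
      refine Fintype.card_le_of_injective (fun y => ⟨i.insertNth (α := fun _ => F) (x i) y, ?_⟩) ?_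
      · rw [hsum, Fin.insertNth_apply_same, ← hsum x, hx]
      · intro y y' hy
        simp only [Subtype.mk.injEq] at hy
        exact Fin.insertNth_right_injective (α := fun _ => F) (x i) hy
    simp at this
    omega

theorem count_Q (h2 : (2:F) ≠ 0) (hodd : Fintype.card F % 2 = 1)
    (A : Matrix (Fin 4) (Fin 4) ℤ) (c : F)
    (hc : c ≠ 0) (hex : ∃ x : Fin 4 → F, Qval A x = c) :
    Fintype.card F ^ 3 ≤
      Fintype.card {x : Fin 4 → F // Qval A x = c} + Fintype.card F ^ 2 := by
  have : Invertible (2:F) := invertibleOfNonzero h2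
  let Q : QuadraticForm F (Fin 4 → F) :=
    (∑ i, ((A i i / 2 : ℤ) : F) • QuadraticMap.linMulLin (LinearMap.proj i) (LinearMap.proj i)) +
    ∑ i, ∑ j ∈ Finset.Ioi i, ((A i j : ℤ) : F) •
      QuadraticMap.linMulLin (LinearMap.proj i) (LinearMap.proj j)
  have hQ : ∀ x, Q x = Qval A x := by
    intro x
    simp [Q, Qval, sq]
  have hd : ∃ w : Fin 4 → F, QuadraticMap.Equivalent Q (QuadraticMap.weightedSumSquares F w) := by
    have := QuadraticForm.equivalent_weightedSumSquares Q
    rwa [Module.finrank_fin_fun] at this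
  obtain ⟨w, ⟨φ⟩⟩ := hd
  have hφ : ∀ x, ∑ i, w i * (φ x i * φ x i) = Qval A x := by
    intro x
    rw [← hQ, ← φ.map_app x, QuadraticMap.weightedSumSquares_apply]
    simp
  have := count_diag h2 hodd w c hc (by
    obtain ⟨x, hx⟩ := hex
    exact ⟨φ x, (hφ x).trans hx⟩)
  refine this.trans (le_of_eq ?_)
  congr 1
  refine (Fintype.card_congr (φ.toLinearEquiv.toEquiv.subtypeEquiv fun x => ?_)).symm
  rw [← hφ]; rfl

end counting

/-- If `p` is odd, `p ∤ n`, and `n` is represented over `ℤ_p`, then `β_p(Q;n) ≥ 1 - 1/p`. -/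
theorem local_density_coprime_odd
    (A : Matrix (Fin 4) (Fin 4) ℤ) (p n : ℕ) [Fact p.Prime]
    (hA : IsGram A) (hprim : IsPrimitiveQF A) (hpd : PosDefQF A)
    (hodd : p ≠ 2) (hn : 0 < n) (hcop : ¬ p ∣ n)
    (h : ∃ x : Fin 4 → ℤ_[p], Qval A x = (n : ℤ_[p])) :
    DensityBound A p n (1 - 1 / (p : ℝ)) := by
  classical
  have hp : p.Prime := Fact.out
  have hp0 : (0:ℝ) < p := by exact_mod_cast hp.pos
  have h1 : p ^ 3 ≤ localCount A p n 1 + p ^ 2 := by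
    have h2 : (2 : ZMod p) ≠ 0 := by
      intro h
      have : ((2:ℕ) : ZMod p) = 0 := by exact_mod_cast h
      rw [ZMod.natCast_eq_zero_iff] at this
      exact hodd ((Nat.prime_dvd_prime_iff_eq hp Nat.prime_two).mp this)
    have := count_Q (F := ZMod p) h2
      (by rw [ZMod.card]; exact hp.eq_two_or_odd.resolve_left hodd) A (n : ZMod p)
      (by rwa [Ne, ZMod.natCast_eq_zero_iff]) (by
        obtain ⟨x, hx⟩ := h
        exact ⟨fun i => PadicInt.toZMod (x i), by rw [Qval_map, hx, map_natCast]⟩)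
    rw [ZMod.card] at this
    unfold localCount
    rw [pow_one, Nat.card_eq_fintype_card]
    exact this
  have hrec : ∀ k, localCount A p n (k+1) = p ^ (3 * k) * localCount A p n 1 := by
    intro k
    induction k with
    | zero => simp
    | succ k ih =>
      rw [localCount_succ A p n (k+1) hodd hcop (by omega), ih]
      ring
  refine ⟨(localCount A p n 1 : ℝ) / (p:ℝ)^3, ?_, ?_⟩
  · rw [← Filter.tendsto_add_atTop_iff_nat 1]
    refine tendsto_const_nhds.congr fun k => ?_
    rw [hrec k]
    push_cast
    field_simp
    ring
  · have h1' : (p:ℝ)^3 ≤ localCount A p n 1 + (p:ℝ)^2 := by exact_mod_cast h1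
    rw [le_div_iff₀ (by positivity)]
    have : (1 - 1 / (p:ℝ)) * (p:ℝ)^3 = (p:ℝ)^3 - (p:ℝ)^2 := by field_simp
    linarith
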